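/- arXiv:2512.23524 — 2 statements merged into one kernel-verified Lean document; each statement's English description precedes it below -/
import Mathlib

section
/- Gradient gap bound via the PL error bound (step in the SharpDRO proof): For every θ ∈ ℝ^d and ω ∈ ℝ^m, ‖∇L*(θ) − ∇_θ L(θ, ω)‖ ≤ l · dist(ω, argmax_{ω'} L(θ, ω')) ≤ κ ‖∇_ω L(θ, ω)‖, where κ = l/μ and ∇L*(θ) = ∇_θ L(θ, ω*(θ)). -/
open MeasureTheory

/-- Partial gradient of `L` with respect to the first variable `θ`. -/
noncomputable def gradTheta {d n : ℕ}
    (L : EuclideanSpace ℝ (Fin d) → EuclideanSpace ℝ (Fin n) → ℝ)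
    (θ : EuclideanSpace ℝ (Fin d)) (ω : EuclideanSpace ℝ (Fin n)) :
    EuclideanSpace ℝ (Fin d) :=
  gradient (fun θ' => L θ' ω) θ

/-- Partial gradient of `L` with respect to the second variable `ω`. -/
noncomputable def gradOmega {d n : ℕ}
    (L : EuclideanSpace ℝ (Fin d) → EuclideanSpace ℝ (Fin n) → ℝ)
    (θ : EuclideanSpace ℝ (Fin d)) (ω : EuclideanSpace ℝ (Fin n)) :
    EuclideanSpace ℝ (Fin n) :=
  gradient (fun ω' => L θ ω') ω

/-- PL error bound, by minimising `φ + c‖· - ω‖`. -/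
theorem pl_error_bound_aux {n : ℕ} (f : EuclideanSpace ℝ (Fin n) → ℝ) (hf : Differentiable ℝ f)
    (M μ : ℝ) (hμ : 0 < μ) (hM : ∀ x, f x ≤ M)
    (S : Set (EuclideanSpace ℝ (Fin n))) (hS : ∀ x, f x = M → x ∈ S)
    (hPL : ∀ x, 2 * μ * (M - f x) ≤ ‖gradient f x‖ ^ 2) (w : EuclideanSpace ℝ (Fin n)) :
    Metric.infDist w S ≤ 1 / μ * ‖gradient f w‖ := by
  have key : ∀ c : ℝ, 0 < c → c < Real.sqrt (μ / 2) →
      c * Metric.infDist w S ≤ Real.sqrt (M - f w) := by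
    intro c hc hcμ
    by_contra! hlt
    have hcont : Continuous (fun x => Real.sqrt (M - f x) + c * ‖x - w‖) := by
      have := hf.continuous
      fun_prop
    have hcoer : Filter.Tendsto (fun x => Real.sqrt (M - f x) + c * ‖x - w‖)
        (Filter.cocompact _) Filter.atTop := by
      refine Filter.tendsto_atTop_mono (f := fun x => c * dist x w) (fun x => ?_) ?_
      · have := Real.sqrt_nonneg (M - f x)
        rw [dist_eq_norm]
        linarith
      · exact (tendsto_dist_right_cocompact_atTop w).const_mul_atTop hc
    obtain ⟨x, hx⟩ := hcont.exists_forall_le hcoer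
    have hxw := hx w
    simp only [sub_self, norm_zero, mul_zero, add_zero] at hxw
    have hxS : x ∉ S := by
      intro hxS
      have h1 : Metric.infDist w S ≤ ‖x - w‖ := by
        rw [← dist_eq_norm, dist_comm]
        exact Metric.infDist_le_dist_of_mem hxS
      have := Real.sqrt_nonneg (M - f x)
      nlinarith
    have hpos : 0 < M - f x := by
      rcases (hM x).lt_or_eq with h | h
      · linarith
      · exact absurd (hS x h) hxS
    set s := Real.sqrt (M - f x) with hs
    have hspos : 0 < s := Real.sqrt_pos.mpr hpos
    have hss : s ^ 2 = M - f x := Real.sq_sqrt hpos.le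
    set g := gradient f x with hg
    -- slope of f at x along g
    have hgrad : HasGradientAt f g x := (hf x).hasGradientAt
    have hline : HasDerivAt (fun t : ℝ => f (x + t • g)) (‖g‖ ^ 2) 0 := by
      have h1 : HasDerivAt (fun t : ℝ => x + t • g) g 0 := by
        simpa using ((hasDerivAt_id (0:ℝ)).smul_const g).const_add x
      have h2 : HasFDerivAt f (InnerProductSpace.toDual ℝ _ g) (x + (0:ℝ) • g) := by
        simpa using hgrad.hasFDerivAt
      have h3 := h2.comp_hasDerivAt (0:ℝ) h1
      simpa [Function.comp_def] using h3
    have hψ : HasDerivAt (fun t : ℝ => Real.sqrt (M - f (x + t • g)))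
        (-(‖g‖ ^ 2) / (2 * s)) 0 := by
      have h1 := (hline.const_sub M).sqrt (by simpa using hpos.ne')
      simpa [hs] using h1
    have hslope := hψ.hasDerivWithinAt (s := Set.Ioi 0)
    rw [hasDerivWithinAt_iff_tendsto_slope' (by simp)] at hslope
    have hge : -(c * ‖g‖) ≤ -(‖g‖ ^ 2) / (2 * s) := by
      refine ge_of_tendsto hslope ?_
      filter_upwards [self_mem_nhdsWithin] with t ht
      have ht : 0 < t := ht
      have h1 := hx (x + t • g)
      have h2 : ‖x + t • g - w‖ ≤ ‖x - w‖ + t * ‖g‖ := by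
        have : x + t • g - w = (x - w) + t • g := by abel
        rw [this]
        refine (norm_add_le _ _).trans ?_
        rw [norm_smul, Real.norm_of_nonneg ht.le]
      rw [slope_def_field, le_div_iff₀ (by linarith)]
      simp only [zero_smul, add_zero, sub_zero]
      nlinarith [mul_le_mul_of_nonneg_left h2 hc.le]
    have hPLx := hPL x
    rw [← hss, ← hg] at hPLx
    have hgpos : 0 < ‖g‖ := by
      by_contra! h
      have : ‖g‖ = 0 := le_antisymm h (norm_nonneg _)
      rw [this] at hPLx
      have : 0 < 2 * μ * s ^ 2 := by positivity
      simp at hPLx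
      linarith
    have h5 : ‖g‖ ≤ 2 * s * c := by
      rw [le_div_iff₀ (by positivity)] at hge
      have : ‖g‖ * ‖g‖ ≤ ‖g‖ * (2 * s * c) := by nlinarith
      exact le_of_mul_le_mul_left this hgpos
    have h6 : c ^ 2 < μ / 2 := (Real.lt_sqrt hc.le).mp hcμ
    have h7 : ‖g‖ ^ 2 ≤ (2 * s * c) ^ 2 := by gcongr
    have h8 : s ^ 2 * c ^ 2 < s ^ 2 * (μ / 2) := by gcongr
    nlinarith
  have hq : 0 < Real.sqrt (μ / 2) := Real.sqrt_pos.mpr (by positivity)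
  have key2 : Real.sqrt (μ / 2) * Metric.infDist w S ≤ Real.sqrt (M - f w) := by
    have ht : Filter.Tendsto (fun c : ℝ => c * Metric.infDist w S)
        (nhdsWithin (Real.sqrt (μ / 2)) (Set.Iio (Real.sqrt (μ / 2))))
        (nhds (Real.sqrt (μ / 2) * Metric.infDist w S)) :=
      ((continuous_id.mul continuous_const).tendsto _).mono_left nhdsWithin_le_nhds
    refine le_of_tendsto ht ?_
    filter_upwards [Ioo_mem_nhdsLT hq] with c hc
    exact key c hc.1 hc.2
  have hD : 0 ≤ Metric.infDist w S := Metric.infDist_nonneg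
  have h1 : (Real.sqrt (μ / 2) * Metric.infDist w S) ^ 2 ≤ (Real.sqrt (M - f w)) ^ 2 := by
    gcongr
  rw [mul_pow, Real.sq_sqrt (by positivity), Real.sq_sqrt (by linarith [hM w])] at h1
  have h2 := hPL w
  have h3 : (μ * Metric.infDist w S) ^ 2 ≤ ‖gradient f w‖ ^ 2 := by
    nlinarith [mul_le_mul_of_nonneg_left h1 hμ.le]
  have h4 := (sq_le_sq₀ (by positivity) (norm_nonneg _)).mp h3
  rw [one_div, ← div_eq_inv_mul, le_div_iff₀ hμ]
  linarith

/-- **Gradient gap bound via the PL error bound (step in the SharpDRO proof).**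
For every `θ` and `ω`, `‖∇L*(θ) − ∇_θ L(θ, ω)‖ ≤ l · dist(ω, argmax L(θ, ·)) ≤ κ ‖∇_ω L(θ, ω)‖`
with `κ = l/μ`. -/
theorem sharpDRO_gradient_gap_bound {d n : ℕ}
    (L : EuclideanSpace ℝ (Fin d) → EuclideanSpace ℝ (Fin n) → ℝ)
    (l μpl : ℝ) (hl : 0 < l) (hμpl : 0 < μpl)
    (hdiff : Differentiable ℝ (Function.uncurry L))
    (hLip : ∀ θ₁ ω₁ θ₂ ω₂,
      ‖gradTheta L θ₁ ω₁ - gradTheta L θ₂ ω₂‖ ≤ l * Real.sqrt (‖θ₁ - θ₂‖ ^ 2 + ‖ω₁ - ω₂‖ ^ 2) ∧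
      ‖gradOmega L θ₁ ω₁ - gradOmega L θ₂ ω₂‖ ≤ l * Real.sqrt (‖θ₁ - θ₂‖ ^ 2 + ‖ω₁ - ω₂‖ ^ 2))
    (Lstar : EuclideanSpace ℝ (Fin d) → ℝ)
    (hLstar : ∀ θ, IsGreatest (Set.range (L θ)) (Lstar θ))
    (hPL : ∀ θ ω, 2 * μpl * (Lstar θ - L θ ω) ≤ ‖gradOmega L θ ω‖ ^ 2) :
    ∀ θ ω,
      ‖gradient Lstar θ - gradTheta L θ ω‖
          ≤ l * Metric.infDist ω {ω' | ∀ ω'', L θ ω'' ≤ L θ ω'} ∧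
      l * Metric.infDist ω {ω' | ∀ ω'', L θ ω'' ≤ L θ ω'} ≤ l / μpl * ‖gradOmega L θ ω‖ := by
  intro θ ω
  have hd2 : ∀ θ, Differentiable ℝ (L θ) := fun θ =>
    hdiff.comp (f := fun ω => (θ, ω)) (by fun_prop)
  have hd1 : ∀ ω, Differentiable ℝ (fun θ => L θ ω) := fun ω =>
    hdiff.comp (f := fun θ => (θ, ω)) (by fun_prop)
  have hle : ∀ θ ω, L θ ω ≤ Lstar θ := fun θ ω => (hLstar θ).2 ⟨ω, rfl⟩
  obtain ⟨ω₀, hω₀⟩ := (hLstar θ).1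
  have hne : {ω' | ∀ ω'', L θ ω'' ≤ L θ ω'}.Nonempty :=
    ⟨ω₀, fun ω'' => by rw [hω₀]; exact hle _ _⟩
  constructor
  · have hall : ∀ y ∈ {ω' | ∀ ω'', L θ ω'' ≤ L θ ω'},
        ‖gradient Lstar θ - gradTheta L θ ω‖ ≤ l * dist ω y := by
      intro y hy
      have hyM : L θ y = Lstar θ := le_antisymm (hle _ _) (hω₀ ▸ hy ω₀)
      have hg0 : gradOmega L θ y = 0 := by
        have hmax : IsLocalMax (L θ) y := Filter.Eventually.of_forall hy
        have := hmax.fderiv_eq_zero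
        simp only [gradOmega, gradient]
        change (InnerProductSpace.toDual ℝ _).symm (fderiv ℝ (L θ) y) = 0
        rw [this, map_zero]
      have hG : HasGradientAt (fun θ' => L θ' y) (gradTheta L θ y) θ := (hd1 y θ).hasGradientAt
      have hrem : HasFDerivAt (fun θ' => Lstar θ' - L θ' y)
          (0 : EuclideanSpace ℝ (Fin d) →L[ℝ] ℝ) θ := by
        have hO : (fun θ' => Lstar θ' - L θ' y) =O[nhds θ] fun θ' => ‖θ' - θ‖ ^ 2 := by
          refine Asymptotics.IsBigO.of_bound (l ^ 2 / (2 * μpl))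
            (Filter.Eventually.of_forall fun θ' => ?_)
          have h1 := hPL θ' y
          have h2 := (hLip θ' y θ y).2
          rw [hg0] at h2
          simp only [sub_zero, sub_self, norm_zero, ne_eq, OfNat.ofNat_ne_zero,
            not_false_eq_true, zero_pow, add_zero] at h2
          rw [Real.sqrt_sq (norm_nonneg _)] at h2
          have h3 : ‖gradOmega L θ' y‖ ^ 2 ≤ (l * ‖θ' - θ‖) ^ 2 := by gcongr
          rw [Real.norm_of_nonneg (by linarith [hle θ' y]), Real.norm_of_nonneg (by positivity),
            div_mul_eq_mul_div, le_div_iff₀ (by positivity)]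
          nlinarith
        exact hO.hasFDerivAt (by norm_num)
      have hsum := hrem.add hG.hasFDerivAt
      have hgr : HasGradientAt Lstar (gradTheta L θ y) θ := by
        rw [hasGradientAt_iff_hasFDerivAt]
        rw [zero_add] at hsum
        refine hsum.congr_of_eventuallyEq (Filter.Eventually.of_forall fun z => ?_)
        simp
      rw [hgr.gradient]
      have h2 := (hLip θ y θ ω).1
      simp only [sub_self, norm_zero, ne_eq, OfNat.ofNat_ne_zero,
            not_false_eq_true, zero_pow, zero_add] at h2
      rwa [Real.sqrt_sq (norm_nonneg _), ← dist_eq_norm y ω, dist_comm] at h2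
    rw [← div_le_iff₀' hl, Metric.le_infDist hne]
    intro y hy
    rw [div_le_iff₀' hl]
    exact hall y hy
  · have h := pl_error_bound_aux (L θ) (hd2 θ) (Lstar θ) μpl hμpl (hle θ)
      {ω' | ∀ ω'', L θ ω'' ≤ L θ ω'} (fun x hx ω'' => by rw [hx]; exact hle _ _) (hPL θ) ω
    calc _ ≤ l * (1 / μpl * ‖gradient (L θ) ω‖) := by gcongr
      _ = _ := by simp only [gradOmega]; ring
end

section
/- Squared Bayes-risk gap bounded by the uniqueness information of the out-of-modal variable (step in the Out-of-Modal proof): Let h* be pointwise Bayes optimal given (X_1, X_2, X^O) and h*_{1,2} pointwise Bayes optimal given (X_1, X_2), both assumed to exist as measurable functions. Then (L(h*_{1,2}) − L(h*))² ≤ I(X^O; Y | X_1, X_2). -/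
open MeasureTheory ProbabilityTheory
open scoped ENNReal

-- Kullback–Leibler divergence between two measures: `∫ log(dp/dq) dp` when `p ≪ q` and the
-- log-likelihood ratio is integrable, and `∞` otherwise.
open Classical in
noncomputable def klDiv {α : Type*} [MeasurableSpace α] (p q : Measure α) : ℝ≥0∞ :=
  if p ≪ q ∧ Integrable (llr p q) p then ENNReal.ofReal (∫ x, llr p q x ∂p) else ⊤

/-- Conditional mutual information `I(U; Y | W)`: the expectation over `(W, U)` of the
Kullback–Leibler divergence `KL(P_{Y | W, U} ‖ P_{Y | W})` between the conditional
distributions of `Y`. -/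
noncomputable def condMutualInfo {Ωs 𝒴 β γ : Type*} [MeasurableSpace Ωs] [MeasurableSpace 𝒴]
    [StandardBorelSpace 𝒴] [Nonempty 𝒴] [MeasurableSpace β] [MeasurableSpace γ]
    (P : Measure Ωs) [IsFiniteMeasure P] (U : Ωs → β) (Y : Ωs → 𝒴) (W : Ωs → γ) : ℝ≥0∞ :=
  ∫⁻ x, klDiv (condDistrib Y (fun ω => (W ω, U ω)) P (W x, U x))
      (condDistrib Y W P (W x)) ∂P

/-- A classifier `h` is (pointwise) Bayes optimal given `W` if for almost every value `w` of
`W`, `h w` minimizes the conditional expected loss `E[ℓ(·, Y) | W = w]`. -/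
def BayesOptimal {Ωs 𝒴 γ Yhat : Type*} [MeasurableSpace Ωs] [MeasurableSpace 𝒴]
    [StandardBorelSpace 𝒴] [Nonempty 𝒴] [MeasurableSpace γ]
    (P : Measure Ωs) [IsFiniteMeasure P] (ℓ : Yhat → 𝒴 → ℝ)
    (Y : Ωs → 𝒴) (W : Ωs → γ) (h : γ → Yhat) : Prop :=
  ∀ᵐ w ∂(P.map W), ∀ yhat, ∫ y, ℓ (h w) y ∂(condDistrib Y W P w)
      ≤ ∫ y, ℓ yhat y ∂(condDistrib Y W P w)

/-- The risk `L(h) := E[ℓ(h(W), Y)]` of a classifier `h` based on the information `W`. -/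
noncomputable def risk {Ωs 𝒴 γ Yhat : Type*} [MeasurableSpace Ωs]
    (P : Measure Ωs) (ℓ : Yhat → 𝒴 → ℝ) (Y : Ωs → 𝒴) (W : Ωs → γ) (h : γ → Yhat) : ℝ :=
  ∫ x, ℓ (h (W x)) (Y x) ∂P


lemma aux_klFun_ge (s : ℝ) (hs : 0 ≤ s) : (1 - s) ^ 2 ≤ InformationTheory.klFun (s ^ 2) := by
  rw [InformationTheory.klFun_apply, Real.log_pow]
  rcases hs.eq_or_lt with rfl | h
  · norm_num
  · have h1 := Real.one_sub_inv_le_log_of_pos h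
    have h2 : s * (1 - s⁻¹) ≤ s * Real.log s := mul_le_mul_of_nonneg_left h1 hs
    have h3 : s * (1 - s⁻¹) = s - 1 := by field_simp
    rw [h3] at h2
    have h4 := mul_le_mul_of_nonneg_left h2 hs
    push_cast
    nlinarith

lemma aux_pointwise (t f r : ℝ) (hr : 0 ≤ r) (hf0 : 0 ≤ f) (hf1 : f ≤ 1) :
    t * ((f - 1 / 2) * (1 - r)) ≤ InformationTheory.klFun r / 2 + t ^ 2 / 4 * (1 + r) := by
  obtain ⟨s, hs, rfl⟩ : ∃ s : ℝ, 0 ≤ s ∧ r = s ^ 2 :=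
    ⟨√r, Real.sqrt_nonneg _, (Real.sq_sqrt hr).symm⟩
  have h1 := aux_klFun_ge s hs
  have h2 : 0 ≤ (1 - s - (f - 1 / 2) * (t * (1 + s))) ^ 2 := sq_nonneg _
  have h3 : 0 ≤ (t * (1 + s)) ^ 2 * (f * (1 - f)) :=
    mul_nonneg (sq_nonneg _) (mul_nonneg hf0 (by linarith))
  have h4 : 0 ≤ (t * (1 - s)) ^ 2 := sq_nonneg _
  nlinarith

lemma aux_pinsker {α : Type*} [MeasurableSpace α] (p q : Measure α) [IsProbabilityMeasure p]
    [IsProbabilityMeasure q] (f : α → ℝ) (hf : Measurable f) (hf01 : ∀ x, f x ∈ Set.Icc (0 : ℝ) 1) :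
    ENNReal.ofReal ((∫ x, f x ∂q - ∫ x, f x ∂p) ^ 2) ≤ klDiv p q := by
  unfold klDiv
  split_ifs with h
  swap
  · exact le_top
  obtain ⟨hac, hint⟩ := h
  apply ENNReal.ofReal_le_ofReal
  have hK := InformationTheory.integral_klFun_rnDeriv hac hint
  have hKi := (InformationTheory.integrable_klFun_rnDeriv_iff hac).2 hint
  simp only [probReal_univ, add_sub_cancel_right] at hK
  rw [← hK]
  have hfi : ∀ m : Measure α, IsProbabilityMeasure m → Integrable f m := fun m _ =>
    Integrable.of_bound hf.aestronglyMeasurable 1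
      (Filter.Eventually.of_forall fun x => by
        rw [Real.norm_eq_abs, abs_of_nonneg (hf01 x).1]; exact (hf01 x).2)
  have hrint : Integrable (fun x => (p.rnDeriv q x).toReal) q := Measure.integrable_toReal_rnDeriv
  have hr1 : ∫ x, (p.rnDeriv q x).toReal ∂q = 1 := by
    rw [Measure.integral_toReal_rnDeriv hac]; simp
  have hrf : ∫ x, (p.rnDeriv q x).toReal * f x ∂q = ∫ x, f x ∂p := integral_rnDeriv_smul hac
  have hrfi : Integrable (fun x => (p.rnDeriv q x).toReal * f x) q :=
    (integrable_rnDeriv_smul_iff hac).2 (hfi p inferInstance)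
  have hfq := hfi q inferInstance
  set r : α → ℝ := fun x => (p.rnDeriv q x).toReal with hr
  set D := ∫ x, f x ∂q - ∫ x, f x ∂p with hD
  have hrfi' : Integrable (fun x => r x * f x) q := hrfi
  have hrf' : ∫ x, r x * f x ∂q = ∫ x, f x ∂p := hrf
  have hKi' : Integrable (fun x => InformationTheory.klFun (r x)) q := hKi
  have i1 : Integrable (fun x => f x - r x * f x) q := hfq.sub hrfi'
  have i2 : Integrable (fun x => 1 / 2 - 1 / 2 * r x) q :=
    (integrable_const _).sub (hrint.const_mul _)
  have i3 : Integrable (fun x => 1 + r x) q := (integrable_const _).add hrint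
  have hr1' : ∫ x, r x ∂q = 1 := hr1
  have e1 : ∫ x, D * ((f x - 1 / 2) * (1 - r x)) ∂q = D * D := by
    rw [integral_const_mul]
    congr 1
    have : ∀ x, (f x - 1 / 2) * (1 - r x) = (f x - r x * f x) - (1 / 2 - 1 / 2 * r x) := by
      intro x; ring
    simp_rw [this]
    rw [integral_sub i1 i2,
      integral_sub hfq hrfi', integral_sub (integrable_const _) (hrint.const_mul _),
      integral_const_mul, hr1', hrf']
    simp [hD]
  have e2 : ∫ x, (InformationTheory.klFun (r x) / 2 + D ^ 2 / 4 * (1 + r x)) ∂q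
      = (∫ x, InformationTheory.klFun (r x) ∂q) / 2 + D ^ 2 / 2 := by
    rw [integral_add (hKi'.div_const _) (i3.const_mul _),
      integral_div, integral_const_mul, integral_add (integrable_const _) hrint, hr1']
    simp; ring
  have hle : ∫ x, D * ((f x - 1 / 2) * (1 - r x)) ∂q
      ≤ ∫ x, (InformationTheory.klFun (r x) / 2 + D ^ 2 / 4 * (1 + r x)) ∂q := by
    apply integral_mono
    · have : (fun x => D * ((f x - 1 / 2) * (1 - r x)))
          = fun x => D * ((f x - r x * f x) - (1 / 2 - 1 / 2 * r x)) := by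
        funext x; ring
      rw [this]
      exact ((hfq.sub hrfi).sub ((integrable_const _).sub (hrint.const_mul _))).const_mul _
    · exact (hKi.div_const _).add (((integrable_const _).add hrint).const_mul _)
    · intro x
      exact aux_pointwise D (f x) (r x) ENNReal.toReal_nonneg (hf01 x).1 (hf01 x).2
  rw [e1, e2] at hle
  nlinarith

lemma aux_disint {Ωs 𝒴 γ : Type*} [MeasurableSpace Ωs] [MeasurableSpace 𝒴]
    [StandardBorelSpace 𝒴] [Nonempty 𝒴] [MeasurableSpace γ]
    (P : Measure Ωs) [IsProbabilityMeasure P] (Y : Ωs → 𝒴) (W : Ωs → γ)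
    (hY : Measurable Y) (hW : Measurable W) (F : γ × 𝒴 → ℝ) (hF : Measurable F)
    (hF01 : ∀ z, F z ∈ Set.Icc (0 : ℝ) 1) :
    ∫ x, F (W x, Y x) ∂P = ∫ x, ∫ y, F (W x, y) ∂(condDistrib Y W P (W x)) ∂P := by
  have h1 : ∫ x, F (W x, Y x) ∂P = ∫ z, F z ∂(P.map (fun a => (W a, Y a))) := by
    rw [integral_map (hW.prodMk hY).aemeasurable hF.aestronglyMeasurable]
  have : IsProbabilityMeasure (P.map W) := Measure.isProbabilityMeasure_map hW.aemeasurable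
  rw [h1, ← compProd_map_condDistrib hY.aemeasurable, Measure.integral_compProd, integral_map]
  · exact hW.aemeasurable
  · exact (hF.stronglyMeasurable.integral_kernel_prod_right'
      (κ := condDistrib Y W P)).aestronglyMeasurable
  · exact Integrable.of_bound hF.aestronglyMeasurable 1
      (Filter.Eventually.of_forall fun x => by
        rw [Real.norm_eq_abs, abs_of_nonneg (hF01 x).1]; exact (hF01 x).2)

lemma aux_meas {Ωs 𝒴 γ : Type*} [MeasurableSpace Ωs] [MeasurableSpace 𝒴] [MeasurableSpace γ]
    (κ : Kernel γ 𝒴) [IsMarkovKernel κ] (W : Ωs → γ)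
    (hW : Measurable W) (F : Ωs × 𝒴 → ℝ) (hF : Measurable F) :
    Measurable fun x => ∫ y, F (x, y) ∂(κ (W x)) :=
  (hF.stronglyMeasurable.integral_kernel_prod_right' (κ := κ.comap W hW)).measurable

lemma aux_int01 {α : Type*} [MeasurableSpace α] (m : Measure α) [IsProbabilityMeasure m]
    (f : α → ℝ) (h : ∀ x, f x ∈ Set.Icc (0 : ℝ) 1) : ∫ x, f x ∂m ∈ Set.Icc (0 : ℝ) 1 := by
  refine ⟨integral_nonneg fun x => (h x).1, ?_⟩
  have := integral_mono_of_nonneg (μ := m) (Filter.Eventually.of_forall fun x => (h x).1)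
    (integrable_const (1 : ℝ)) (Filter.Eventually.of_forall fun x => (h x).2)
  simpa using this

lemma aux_integrable {α : Type*} [MeasurableSpace α] (m : Measure α) [IsProbabilityMeasure m]
    (f : α → ℝ) (hf : Measurable f) (h : ∀ x, f x ∈ Set.Icc (0 : ℝ) 1) : Integrable f m :=
  Integrable.of_bound hf.aestronglyMeasurable 1
      (Filter.Eventually.of_forall fun x => by
        rw [Real.norm_eq_abs, abs_of_nonneg (h x).1]; exact (h x).2)

/-- **Squared Bayes-risk gap bounded by the uniqueness information of the out-of-modal
variable (step in the Out-of-Modal proof).** -/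
theorem oom_squared_gap_le_uniqueness_info
    {Ωs 𝒴 Yhat β₁ β₂ βO : Type*} [MeasurableSpace Ωs] [MeasurableSpace 𝒴]
    [StandardBorelSpace 𝒴] [Nonempty 𝒴] [MeasurableSpace Yhat]
    [MeasurableSpace β₁] [MeasurableSpace β₂] [MeasurableSpace βO]
    (P : Measure Ωs) [IsProbabilityMeasure P]
    (ℓ : Yhat → 𝒴 → ℝ) (hℓmeas : Measurable (Function.uncurry ℓ))
    (hℓ01 : ∀ yhat y, ℓ yhat y ∈ Set.Icc (0 : ℝ) 1)
    (X₁ : Ωs → β₁) (X₂ : Ωs → β₂) (XO : Ωs → βO) (Y : Ωs → 𝒴)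
    (hX₁ : Measurable X₁) (hX₂ : Measurable X₂) (hXO : Measurable XO) (hYm : Measurable Y)
    (hstar : β₁ × β₂ × βO → Yhat) (h12 : β₁ × β₂ → Yhat)
    (hstarm : Measurable hstar) (h12m : Measurable h12)
    (hBstar : BayesOptimal P ℓ Y (fun x => (X₁ x, X₂ x, XO x)) hstar)
    (hB12 : BayesOptimal P ℓ Y (fun x => (X₁ x, X₂ x)) h12) :
    ENNReal.ofReal ((risk P ℓ Y (fun x => (X₁ x, X₂ x)) h12
          - risk P ℓ Y (fun x => (X₁ x, X₂ x, XO x)) hstar) ^ 2)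
      ≤ condMutualInfo P XO Y (fun x => (X₁ x, X₂ x)) := by
  set W : Ωs → β₁ × β₂ := fun x => (X₁ x, X₂ x) with hWdef
  set V : Ωs → β₁ × β₂ × βO := fun x => (X₁ x, X₂ x, XO x) with hVdef
  have hW : Measurable W := hX₁.prodMk hX₂
  have hV : Measurable V := hX₁.prodMk (hX₂.prodMk hXO)
  set U : Ωs → (β₁ × β₂) × βO := fun x => (W x, XO x) with hUdef
  have hU : Measurable U := hW.prodMk hXO
  have hℓs : ∀ a, Measurable (ℓ a) := fun a => hℓmeas.comp measurable_prodMk_left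
  -- the risk of hstar is at most that of h12
  have hle : risk P ℓ Y V hstar ≤ risk P ℓ Y W h12 := by
    have g12 : Measurable fun v : β₁ × β₂ × βO => h12 (v.1, v.2.1) :=
      h12m.comp (measurable_fst.prodMk (measurable_fst.comp measurable_snd))
    have e1 := aux_disint P Y V hYm hV _
      (hℓmeas.comp ((hstarm.comp measurable_fst).prodMk measurable_snd)) (fun z => hℓ01 _ _)
    have e2 := aux_disint P Y V hYm hV _
      (hℓmeas.comp ((g12.comp measurable_fst).prodMk measurable_snd)) (fun z => hℓ01 _ _)
    have e1' : risk P ℓ Y V hstar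
        = ∫ x, ∫ y, ℓ (hstar (V x)) y ∂(condDistrib Y V P (V x)) ∂P := e1
    have e2' : risk P ℓ Y W h12
        = ∫ x, ∫ y, ℓ (h12 (W x)) y ∂(condDistrib Y V P (V x)) ∂P := e2
    rw [e1', e2']
    apply integral_mono_ae
    · refine aux_integrable P _ (aux_meas _ V hV (fun z => ℓ (hstar (V z.1)) z.2)
        (hℓmeas.comp (((hstarm.comp hV).comp measurable_fst).prodMk measurable_snd)))
        fun x => aux_int01 _ _ fun y => hℓ01 _ _
    · refine aux_integrable P _ (aux_meas _ V hV (fun z => ℓ (h12 (W z.1)) z.2)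
        (hℓmeas.comp (((h12m.comp hW).comp measurable_fst).prodMk measurable_snd)))
        fun x => aux_int01 _ _ fun y => hℓ01 _ _
    · filter_upwards [ae_of_ae_map hV.aemeasurable hBstar] with x hx
      exact hx _
  set A : Ωs → ℝ := fun x => ∫ y, ℓ (hstar (V x)) y ∂(condDistrib Y W P (W x)) with hA
  set B : Ωs → ℝ := fun x => ∫ y, ℓ (hstar (V x)) y ∂(condDistrib Y U P (U x)) with hB
  have hA01 : ∀ x, A x ∈ Set.Icc (0 : ℝ) 1 := fun x => aux_int01 _ _ fun y => hℓ01 _ _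
  have hB01 : ∀ x, B x ∈ Set.Icc (0 : ℝ) 1 := fun x => aux_int01 _ _ fun y => hℓ01 _ _
  have hAm : Measurable A := aux_meas _ W hW (fun z => ℓ (hstar (V z.1)) z.2)
        (hℓmeas.comp (((hstarm.comp hV).comp measurable_fst).prodMk measurable_snd))
  have hBm : Measurable B := aux_meas _ U hU (fun z => ℓ (hstar (V z.1)) z.2)
        (hℓmeas.comp (((hstarm.comp hV).comp measurable_fst).prodMk measurable_snd))
  have hAi := aux_integrable P A hAm hA01
  have hBi := aux_integrable P B hBm hB01
  have hub : risk P ℓ Y W h12 ≤ ∫ x, A x ∂P := by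
    have e2 := aux_disint P Y W hYm hW _
      (hℓmeas.comp ((h12m.comp measurable_fst).prodMk measurable_snd)) (fun z => hℓ01 _ _)
    have e2' : risk P ℓ Y W h12
        = ∫ x, ∫ y, ℓ (h12 (W x)) y ∂(condDistrib Y W P (W x)) ∂P := e2
    rw [e2']
    apply integral_mono_ae
    · refine aux_integrable P _ (aux_meas _ W hW (fun z => ℓ (h12 (W z.1)) z.2)
        (hℓmeas.comp (((h12m.comp hW).comp measurable_fst).prodMk measurable_snd)))
        fun x => aux_int01 _ _ fun y => hℓ01 _ _
    · exact hAi
    · filter_upwards [ae_of_ae_map hW.aemeasurable hB12] with x hx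
      exact hx _
  have hBeq : risk P ℓ Y V hstar = ∫ x, B x ∂P := by
    have gs : Measurable fun v : (β₁ × β₂) × βO => hstar (v.1.1, v.1.2, v.2) :=
      hstarm.comp (by fun_prop)
    exact aux_disint P Y U hYm hU _
      (hℓmeas.comp ((gs.comp measurable_fst).prodMk measurable_snd)) (fun z => hℓ01 _ _)
  set D : Ωs → ℝ := fun x => A x - B x with hD
  have hDi : Integrable D P := hAi.sub hBi
  have hD2i : Integrable (fun x => D x ^ 2) P :=
    aux_integrable P _ ((hAm.sub hBm).pow_const 2) fun x => by
      have h1 := hA01 x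
      have h2 := hB01 x
      refine ⟨sq_nonneg _, ?_⟩
      simp only [hD]
      rw [sq_le_one_iff_abs_le_one, abs_le]
      constructor <;> linarith [h1.1, h1.2, h2.1, h2.2]
  have hgap : risk P ℓ Y W h12 - risk P ℓ Y V hstar ≤ ∫ x, D x ∂P := by
    rw [integral_sub hAi hBi, hBeq]; linarith
  have hjen : (∫ x, D x ∂P) ^ 2 ≤ ∫ x, D x ^ 2 ∂P := by
    set c := ∫ x, D x ∂P with hc
    have h0 : 0 ≤ ∫ x, (D x - c) ^ 2 ∂P := integral_nonneg fun x => sq_nonneg _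
    have h1 : ∀ x, (D x - c) ^ 2 = D x ^ 2 - (2 * c) * D x + c ^ 2 := fun x => by ring
    simp_rw [h1] at h0
    have hsub : Integrable (fun x => D x ^ 2 - (2 * c) * D x) P := hD2i.sub (hDi.const_mul _)
    rw [integral_add hsub (integrable_const _),
      integral_sub hD2i (hDi.const_mul _), integral_const_mul, ← hc] at h0
    simp at h0
    nlinarith
  calc ENNReal.ofReal ((risk P ℓ Y W h12 - risk P ℓ Y V hstar) ^ 2)
      ≤ ENNReal.ofReal (∫ x, D x ^ 2 ∂P) := by
        apply ENNReal.ofReal_le_ofReal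
        refine le_trans ?_ hjen
        exact pow_le_pow_left₀ (by linarith) hgap 2
    _ = ∫⁻ x, ENNReal.ofReal (D x ^ 2) ∂P :=
        ofReal_integral_eq_lintegral_ofReal hD2i (Filter.Eventually.of_forall fun x => sq_nonneg _)
    _ ≤ condMutualInfo P XO Y W := by
        unfold condMutualInfo
        apply lintegral_mono
        intro x
        exact aux_pinsker (condDistrib Y U P (U x)) (condDistrib Y W P (W x))
          (ℓ (hstar (V x))) (hℓs _) (fun y => hℓ01 _ _)
end
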